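/- arXiv:2308.04130 — 2 statements merged into one kernel-verified Lean document; each statement's English description precedes it below -/
import Mathlib

section
/- Let c be in the Tehranchi space 𝕔 and differentiable on (0, ∞), and let k ≥ 0 and α ≥ 0 satisfy c(k) > 0 and -α·c'(k) ≤ c(k) (i.e. α ≤ -c(k)/c'(k) when c'(k) < 0). Then the function 𝕍_{k,α} c defined by (𝕍_{k,α} c)(m) = c(k + α·m)/c(k) belongs to 𝕔: it is convex and satisfies (1 - m)₊ ≤ (𝕍_{k,α} c)(m) ≤ 1 for all m ≥ 0. Moreover 𝕍_{0,1} c = c. -/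
/-!
A convex function on `[0, ∞)` that is bounded above has no secant of positive slope, so `c` is
antitone and its transform is at most `1`. The lower bound is the tangent inequality at `k`:
`c (k + α * m) ≥ c k + α * m * c'(k)`, and the constraint `-α * c'(k) ≤ c k` turns the right-hand
side into at least `(1 - m) * c k`.
-/

/-- The Tehranchi space: convex functions `c` with `(1 - m)₊ ≤ c m ≤ 1` for `m ≥ 0`. -/
def TehranchiSpace (c : ℝ → ℝ) : Prop :=
  ConvexOn ℝ (Set.Ici 0) c ∧ ∀ m : ℝ, 0 ≤ m → max (1 - m) 0 ≤ c m ∧ c m ≤ 1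

theorem antitoneOn_of_convexOn_of_bddAbove {𝕜 : Type*} [Field 𝕜] [LinearOrder 𝕜]
    [IsStrictOrderedRing 𝕜] {s : Set 𝕜} {f : 𝕜 → 𝕜} (hf : ConvexOn 𝕜 s f)
    (hs : ¬BddAbove s) (hfs : BddAbove (f '' s)) : AntitoneOn f s := by
  intro x hx y hy hxy
  by_contra! hlt
  obtain ⟨M, hM⟩ := hfs
  have hyM : f y ≤ M := hM (Set.mem_image_of_mem f hy)
  have hxy' : x < y := hxy.lt_of_ne fun h => hlt.ne (congrArg f h)
  set r := (f y - f x) / (y - x)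
  have hr : 0 < r := div_pos (sub_pos.2 hlt) (sub_pos.2 hxy')
  -- Beyond this abscissa the secant through `x` and `y` exceeds the bound `M`.
  obtain ⟨z, hz, hzM⟩ := not_bddAbove_iff.1 hs (y + (M - f y) / r)
  have hyz : y < z := (le_add_of_nonneg_right (div_nonneg (sub_nonneg.2 hyM) hr.le)).trans_lt hzM
  have hslope : r * (z - y) ≤ f z - f y :=
    (le_div_iff₀ (sub_pos.2 hyz)).1 (hf.slope_mono_adjacent hx hz hxy' hyz)
  have hsecant : M - f y < r * (z - y) := (div_lt_iff₀' hr).1 (lt_sub_iff_add_lt'.2 hzM)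
  have hzM' : f z ≤ M := hM (Set.mem_image_of_mem f hz)
  linarith

theorem add_mul_sub_le_of_convexOn_of_hasDerivWithinAt_Ioi {s : Set ℝ} {f : ℝ → ℝ} {f' x y : ℝ}
    (hf : ConvexOn ℝ s f) (hx : x ∈ s) (hy : y ∈ s) (hxy : x ≤ y)
    (hf' : HasDerivWithinAt f f' (Set.Ioi x) x) : f x + f' * (y - x) ≤ f y := by
  rcases hxy.eq_or_lt with rfl | hlt
  · simp
  · have hslope := hf.le_slope_of_hasDerivWithinAt_Ioi hx hy hlt hf'
    rw [slope_def_field, le_div_iff₀ (sub_pos.2 hlt)] at hslope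
    linarith

/-- The transformation `𝕍_{k,α}`, acting on functions defined on all of `ℝ`; it takes the junk
value `0` when `c k = 0`. -/
noncomputable def tehranchiTransform (k α : ℝ) (c : ℝ → ℝ) : ℝ → ℝ :=
  fun m => c (k + α * m) / c k

theorem convexOn_tehranchiTransform {c : ℝ → ℝ} {k α : ℝ} (hc : ConvexOn ℝ (Set.Ici k) c)
    (hα : 0 ≤ α) (hck : 0 ≤ c k) :
    ConvexOn ℝ (Set.Ici 0) (tehranchiTransform k α c) := by
  let φ : ℝ →ᵃ[ℝ] ℝ := AffineMap.lineMap k (k + α)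
  have hφ (m : ℝ) : φ m = k + α * m := by
    simp only [φ, AffineMap.lineMap_apply_ring']
    ring
  have hmaps : Set.Ici 0 ⊆ φ ⁻¹' Set.Ici k := fun m hm => by
    rw [Set.mem_preimage, hφ]
    exact le_add_of_nonneg_right (mul_nonneg hα hm)
  refine (((hc.comp_affineMap φ).subset hmaps (convex_Ici 0)).smul (inv_nonneg.2 hck)).congr ?_
  intro m _
  simp only [Function.comp_apply, smul_eq_mul, hφ, tehranchiTransform, div_eq_inv_mul]

theorem one_sub_le_tehranchiTransform {c : ℝ → ℝ} {k α g m : ℝ} (hc : ConvexOn ℝ (Set.Ici k) c)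
    (hα : 0 ≤ α) (hck : 0 < c k) (hg : HasDerivWithinAt c g (Set.Ioi k) k)
    (hαg : -α * g ≤ c k) (hm : 0 ≤ m) : 1 - m ≤ tehranchiTransform k α c m := by
  have hle : k ≤ k + α * m := le_add_of_nonneg_right (mul_nonneg hα hm)
  refine (le_div_iff₀ hck).2 ?_
  calc (1 - m) * c k = c k - c k * m := by ring
    _ ≤ c k - -α * g * m := sub_le_sub_left (mul_le_mul_of_nonneg_right hαg hm) _
    _ = c k + g * (k + α * m - k) := by ring
    _ ≤ c (k + α * m) :=
      add_mul_sub_le_of_convexOn_of_hasDerivWithinAt_Ioi hc Set.self_mem_Ici hle hle hg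

namespace TehranchiSpace

variable {c : ℝ → ℝ} {m : ℝ}

theorem convexOn (hc : TehranchiSpace c) : ConvexOn ℝ (Set.Ici 0) c := hc.1

theorem one_sub_le (hc : TehranchiSpace c) (hm : 0 ≤ m) : 1 - m ≤ c m :=
  (le_max_left _ _).trans (hc.2 m hm).1

theorem nonneg (hc : TehranchiSpace c) (hm : 0 ≤ m) : 0 ≤ c m :=
  (le_max_right _ _).trans (hc.2 m hm).1

theorem le_one (hc : TehranchiSpace c) (hm : 0 ≤ m) : c m ≤ 1 := (hc.2 m hm).2

theorem map_zero (hc : TehranchiSpace c) : c 0 = 1 :=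
  le_antisymm (hc.le_one le_rfl) (by simpa only [sub_zero] using hc.one_sub_le le_rfl)

theorem antitoneOn (hc : TehranchiSpace c) : AntitoneOn c (Set.Ici 0) :=
  antitoneOn_of_convexOn_of_bddAbove hc.convexOn (not_bddAbove_Ici 0)
    ⟨1, Set.forall_mem_image.2 fun _ hm => hc.le_one hm⟩

theorem tehranchiTransform_zero_one (hc : TehranchiSpace c) : tehranchiTransform 0 1 c = c := by
  funext m
  simp only [tehranchiTransform, zero_add, one_mul, hc.map_zero, div_one]

end TehranchiSpace

theorem Vka_maps_Tehranchi_into_itself_general {c : ℝ → ℝ} (hc : TehranchiSpace c) {k α g : ℝ}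
    (hk : 0 ≤ k) (hα : 0 ≤ α) (hck : 0 < c k) (hg : HasDerivWithinAt c g (Set.Ioi k) k)
    (hαg : -α * g ≤ c k) :
    TehranchiSpace (tehranchiTransform k α c) ∧ tehranchiTransform 0 1 c = c := by
  have hconv : ConvexOn ℝ (Set.Ici k) c :=
    hc.convexOn.subset (Set.Ici_subset_Ici.2 hk) (convex_Ici k)
  refine ⟨⟨convexOn_tehranchiTransform hconv hα hck.le, fun m hm => ?_⟩,
    hc.tehranchiTransform_zero_one⟩
  have hle : k ≤ k + α * m := le_add_of_nonneg_right (mul_nonneg hα hm)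
  have hnonneg : 0 ≤ tehranchiTransform k α c m := div_nonneg (hc.nonneg (hk.trans hle)) hck.le
  have hle_one : tehranchiTransform k α c m ≤ 1 :=
    (div_le_one hck).2 (hc.antitoneOn hk (hk.trans hle) hle)
  exact ⟨max_le (one_sub_le_tehranchiTransform hconv hα hck hg hαg hm) hnonneg, hle_one⟩

/-- For `c` in the Tehranchi space, differentiable on `(0, ∞)`, `k ≥ 0`, `α ≥ 0` with
`c k > 0` and `-α·c'(k) ≤ c k` (where `g = c'(k)` is the derivative of `c` at `k` from
within `[0, ∞)`), the transform `𝕍_{k,α} c : m ↦ c (k + α·m) / c k` belongs to the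
Tehranchi space; moreover `𝕍_{0,1} c = c`. -/
theorem Vka_maps_Tehranchi_into_itself (c : ℝ → ℝ) (hc : TehranchiSpace c)
    (hdiff : DifferentiableOn ℝ c (Set.Ioi 0))
    (k α g : ℝ) (hk : 0 ≤ k) (hα : 0 ≤ α) (hck : 0 < c k)
    (hg : HasDerivWithinAt c g (Set.Ici 0) k)
    (hαg : -α * g ≤ c k) :
    TehranchiSpace (fun m => c (k + α * m) / c k) ∧
    ∀ m : ℝ, c (0 + 1 * m) / c 0 = c m := by
  have hright : HasDerivWithinAt c g (Set.Ioi k) k := hg.mono fun _ hx => hk.trans (le_of_lt hx)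
  exact (Vka_maps_Tehranchi_into_itself_general hc hk hα hck hright hαg).imp id congrFun
end

section
/- For every real x and every v > 0, it holds that φ(x + v)·Φ(x) + v·Φ(x + v)·Φ(x) - φ(x)·Φ(x + v) > 0. (This inequality shows that in the Black-Scholes model the quantity k·c'(k)² - c(k)·c'(k) - k·c(k)·c''(k) is positive, where c is the normalized Black-Scholes Call price; hence the function S ↦ C(S,K)/(-∂_K C(S,K)) is monotone and the lifted Call-on-Call pricing function exists.) -/
open MeasureTheory

/-- The standard normal probability density function. -/
noncomputable def phi (x : ℝ) : ℝ := Real.exp (-x ^ 2 / 2) / Real.sqrt (2 * Real.pi)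

/-- The standard normal cumulative distribution function. -/
noncomputable def Phi (x : ℝ) : ℝ := ∫ t in Set.Iic x, phi t

/-! Reflecting `t ↦ x - t` gives `exp (x² / 2) Φ(x) = ∫ exp (x t) φ(t) dt` over `t ≥ 0`, so
`log Φ(x) + x² / 2` is the cumulant generating function of the standard Gaussian measure restricted
to `[0, ∞)`. The second derivative of a cumulant generating function is the variance under the
exponentially tilted law, positive here because the measure has no atoms; hence the first
derivative `x + φ(x) / Φ(x)` is strictly increasing. Comparing its values at `x` and `x + v` and
clearing denominators yields the inequality. -/

open ProbabilityTheory Set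

section CumulantGeneratingFunction

variable {Ω : Type*} {mΩ : MeasurableSpace Ω} {μ : Measure Ω} {X : Ω → ℝ}

lemma variance_pos_of_not_ae_eq_const [IsFiniteMeasure μ] (hX : MemLp X 2 μ)
    (hconst : ∀ c, ¬ X =ᵐ[μ] fun _ ↦ c) : 0 < Var[X; μ] :=
  (variance_nonneg X μ).lt_of_ne' fun h ↦ hconst _ (ae_eq_integral_of_variance_eq_zero hX h)

lemma iteratedDeriv_two_cgf_pos {t : ℝ} (ht : t ∈ interior (integrableExpSet X μ))
    (hconst : ∀ c, ¬ X =ᵐ[μ] fun _ ↦ c) : 0 < iteratedDeriv 2 (cgf X μ) t := by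
  have hac : μ ≪ μ.tilted (t * X ·) :=
    absolutelyContinuous_tilted (interior_subset (s := integrableExpSet X μ) ht)
  rw [← variance_tilted_mul ht]
  exact variance_pos_of_not_ae_eq_const (memLp_tilted_mul ht 2) fun c h ↦ hconst c (hac.ae_eq h)

lemma strictMonoOn_deriv_cgf (hconst : ∀ c, ¬ X =ᵐ[μ] fun _ ↦ c) :
    StrictMonoOn (deriv (cgf X μ)) (interior (integrableExpSet X μ)) := by
  refine strictMonoOn_of_deriv_pos convex_integrableExpSet.interior
    analyticOnNhd_cgf.deriv.continuousOn fun t ht ↦ ?_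
  rw [interior_interior] at ht
  simpa only [iteratedDeriv_succ, iteratedDeriv_zero] using iteratedDeriv_two_cgf_pos ht hconst

end CumulantGeneratingFunction

lemma not_ae_eq_const_of_injective {α β : Type*} {mα : MeasurableSpace α} {μ : Measure α}
    [NullSingletonClass μ] [NeZero μ] {f : α → β} (hf : f.Injective) (c : β) :
    ¬ f =ᵐ[μ] fun _ ↦ c := by
  intro h
  have hne : ∀ᵐ a ∂μ, f a ≠ c :=
    measure_eq_zero_iff_ae_notMem.mp ((subsingleton_singleton.preimage hf).measure_zero μ)
  obtain ⟨a, hac, hac'⟩ := (h.and hne).exists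
  exact hac' hac

lemma hasDerivAt_setIntegral_Iic {E : Type*} [NormedAddCommGroup E] [NormedSpace ℝ E]
    [CompleteSpace E] {f : ℝ → E} {x : ℝ} (hf : Integrable f) (hx : ContinuousAt f x) :
    HasDerivAt (fun y ↦ ∫ t in Iic y, f t) (f x) x := by
  have heq (y : ℝ) : ∫ t in Iic y, f t = (∫ t in x..y, f t) + ∫ t in Iic x, f t :=
    sub_eq_iff_eq_add.mp
      (intervalIntegral.integral_Iic_sub_Iic hf.integrableOn hf.integrableOn)
  have hftc : HasDerivAt (fun y ↦ ∫ t in x..y, f t) (f x) x :=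
    intervalIntegral.integral_hasDerivAt_right hf.intervalIntegrable
      hf.aestronglyMeasurable.stronglyMeasurableAtFilter hx
  rw [funext heq]
  exact hftc.add_const _

lemma phi_eq_gaussianPDFReal : phi = gaussianPDFReal 0 1 := by
  ext x
  simp [phi, gaussianPDFReal, div_eq_inv_mul]

lemma hasDerivAt_Phi (x : ℝ) : HasDerivAt Phi (phi x) x := by
  have hcont : Continuous phi := by unfold phi; fun_prop
  have hint : Integrable phi := phi_eq_gaussianPDFReal ▸ integrable_gaussianPDFReal 0 1
  exact hasDerivAt_setIntegral_Iic hint hcont.continuousAt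

lemma phi_mul_exp (x t : ℝ) : phi t * Real.exp (x * t) = Real.exp (x ^ 2 / 2) * phi (x - t) := by
  simp only [phi, div_mul_eq_mul_div, mul_div_assoc', ← Real.exp_add]
  ring_nf

/-- The standard Gaussian measure restricted to `[0, ∞)`, not normalized: it has mass `1 / 2`.
It expresses `exp (x² / 2) Φ(x)` as a moment generating function. -/
noncomputable def halfGaussian : Measure ℝ := (gaussianReal 0 1).restrict (Ici 0)

instance : NullSingletonClass halfGaussian := by
  have := nullSingletonClass_gaussianReal (μ := 0) one_ne_zero
  unfold halfGaussian
  infer_instance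

instance : NeZero halfGaussian := by
  refine ⟨fun h ↦ ?_⟩
  have hvol : volume (Ici (0 : ℝ)) = 0 :=
    gaussianReal_absolutelyContinuous' 0 one_ne_zero (Measure.restrict_eq_zero.mp h)
  simp at hvol

lemma integrableExpSet_id_halfGaussian : integrableExpSet id halfGaussian = univ :=
  eq_univ_of_forall fun t ↦ (integrable_exp_mul_gaussianReal t).restrict

lemma mgf_id_halfGaussian (x : ℝ) : mgf id halfGaussian x = Real.exp (x ^ 2 / 2) * Phi x := by
  calc mgf id halfGaussian x
    _ = ∫ t in Ici 0, phi t * Real.exp (x * t) := by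
      rw [mgf, halfGaussian, ← integral_indicator measurableSet_Ici,
        integral_gaussianReal_eq_integral_smul one_ne_zero, ← integral_indicator measurableSet_Ici]
      simp_rw [phi_eq_gaussianPDFReal, ← smul_eq_mul, ← indicator_smul, id]
    _ = ∫ t in (x - ·) ⁻¹' Iic x, Real.exp (x ^ 2 / 2) * phi (x - t) := by
      simp_rw [preimage_const_sub_Iic, sub_self, phi_mul_exp]
    _ = Real.exp (x ^ 2 / 2) * Phi x := by
      rw [integral_const_mul, Phi, (volume.measurePreserving_sub_left x).setIntegral_preimage_emb
        (measurableEmbedding_subLeft x)]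

lemma Phi_pos (x : ℝ) : 0 < Phi x := by
  have hmgf : 0 < mgf id halfGaussian x :=
    mgf_pos_iff.mpr (integrableExpSet_id_halfGaussian.ge (mem_univ x))
  rw [mgf_id_halfGaussian] at hmgf
  exact pos_of_mul_pos_right hmgf (Real.exp_pos _).le

lemma cgf_id_halfGaussian (x : ℝ) : cgf id halfGaussian x = x ^ 2 / 2 + Real.log (Phi x) := by
  rw [cgf, mgf_id_halfGaussian, Real.log_mul (Real.exp_ne_zero _) (Phi_pos x).ne', Real.log_exp]

lemma deriv_cgf_id_halfGaussian (x : ℝ) : deriv (cgf id halfGaussian) x = x + phi x / Phi x := by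
  have hsq : HasDerivAt (fun y : ℝ ↦ y ^ 2 / 2) x x := by
    simpa using (hasDerivAt_pow 2 x).div_const 2
  rw [funext cgf_id_halfGaussian]
  exact (hsq.add ((hasDerivAt_Phi x).log (Phi_pos x).ne')).deriv

lemma strictMono_add_phi_div_Phi : StrictMono fun x ↦ x + phi x / Phi x := by
  have hcgf : StrictMonoOn (deriv (cgf id halfGaussian)) univ := by
    simpa only [integrableExpSet_id_halfGaussian, interior_univ] using
      strictMonoOn_deriv_cgf
        (not_ae_eq_const_of_injective (μ := halfGaussian) Function.injective_id)
  simpa only [strictMonoOn_univ, funext deriv_cgf_id_halfGaussian] using hcgf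

/-- For every real `x` and every `v > 0`,
`φ(x + v)·Φ(x) + v·Φ(x + v)·Φ(x) - φ(x)·Φ(x + v) > 0`; this inequality guarantees the
existence of the lifted Call-on-Call pricing function in the Black-Scholes model. -/
theorem bs_lifted_existence_inequality (x v : ℝ) (hv : 0 < v) :
    0 < phi (x + v) * Phi x + v * Phi (x + v) * Phi x - phi x * Phi (x + v) := by
  have hx : 0 < Phi x := Phi_pos x
  have hxv : 0 < Phi (x + v) := Phi_pos (x + v)
  have hmono : x + phi x / Phi x < x + v + phi (x + v) / Phi (x + v) :=
    strictMono_add_phi_div_Phi (lt_add_of_pos_right x hv)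
  calc 0 < (x + v + phi (x + v) / Phi (x + v) - (x + phi x / Phi x)) * (Phi x * Phi (x + v)) :=
        mul_pos (sub_pos.mpr hmono) (mul_pos hx hxv)
    _ = phi (x + v) * Phi x + v * Phi (x + v) * Phi x - phi x * Phi (x + v) := by
        field_simp
        ring
end
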